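/- Let 𝒜 be a family of sets such that ⋃𝒜 is countable, and let ℬ be a family of sets closed under supersets (if B ∈ ℬ and B ⊆ C then C ∈ ℬ). Then Player II has a winning strategy in the selection game G_fin(𝒜,ℬ) if and only if Player II has a winning Markov strategy in G_fin(𝒜,ℬ). -/

import Mathlib

/-!
Each reply of Player II is a finite subset of the countable set `⋃₀ 𝒜`, so at every position only
countably many replies occur. Choosing one move of Player I for each of them and discarding all
other moves leaves a countable tree of positions. The Markov strategy enumerates this tree as
`p 0, p 1, …` and answers `A` in round `k` as if the game stood at position `p k`. Against any play
`A 0, A 1, …` there is a branch of the tree along which the original strategy gives only replies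
that the Markov strategy also gives: from position `p k`, continue with the chosen move that draws
the same reply as `A k`. The Markov strategy thus covers a set in `ℬ`, and `ℬ` is closed under
supersets.
-/

open TopologicalSpace Cardinal

/-- Player II has a winning (perfect-information) strategy in the selection game
`G_fin(𝒜, ℬ)`: during round `n`, Player I plays `A n ∈ 𝒜` and II responds with a
finite subset of `A n` depending on `⟨A 0, …, A n⟩`; II wins iff the union of
its selections lies in `ℬ`. -/
def WinStratFin {X : Type*} (𝒜 ℬ : Set (Set X)) : Prop :=
  ∃ σ : (n : ℕ) → (Fin (n + 1) → Set X) → Set X,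
    (∀ (n : ℕ) (s : Fin (n + 1) → Set X), (∀ i, s i ∈ 𝒜) →
      (σ n s).Finite ∧ σ n s ⊆ s (Fin.last n)) ∧
    ∀ A : ℕ → Set X, (∀ n, A n ∈ 𝒜) →
      (⋃ n : ℕ, σ n (fun i => A i)) ∈ ℬ

/-- Player II has a winning Markov strategy in `G_fin(𝒜, ℬ)`: its finite selection
from `A n` depends only on `A n` and the round number `n`. -/
def WinMarkovFin {X : Type*} (𝒜 ℬ : Set (Set X)) : Prop :=
  ∃ σ : Set X → ℕ → Set X,
    (∀ A ∈ 𝒜, ∀ n : ℕ, (σ A n).Finite ∧ σ A n ⊆ A) ∧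
    ∀ A : ℕ → Set X, (∀ n, A n ∈ 𝒜) → (⋃ n : ℕ, σ (A n) n) ∈ ℬ

/-- Player II has a winning (perfect-information) strategy in the strong selection
game `G_1(𝒜, ℬ)`: during round `n`, Player I plays `A n ∈ 𝒜` and II responds with a
single element of `A n` depending on `⟨A 0, …, A n⟩`; II wins iff the set of
its selections lies in `ℬ`. -/
def WinStratOne {X : Type*} (𝒜 ℬ : Set (Set X)) : Prop :=
  ∃ σ : (n : ℕ) → (Fin (n + 1) → Set X) → X,
    (∀ (n : ℕ) (s : Fin (n + 1) → Set X), (∀ i, s i ∈ 𝒜) →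
      σ n s ∈ s (Fin.last n)) ∧
    ∀ A : ℕ → Set X, (∀ n, A n ∈ 𝒜) →
      {x | ∃ n : ℕ, x = σ n (fun i => A i)} ∈ ℬ

/-- Player II has a winning Markov strategy in `G_1(𝒜, ℬ)`. -/
def WinMarkovOne {X : Type*} (𝒜 ℬ : Set (Set X)) : Prop :=
  ∃ σ : Set X → ℕ → X,
    (∀ A ∈ 𝒜, ∀ n : ℕ, σ A n ∈ A) ∧
    ∀ A : ℕ → Set X, (∀ n, A n ∈ 𝒜) → {x | ∃ n : ℕ, x = σ (A n) n} ∈ ℬ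

/-- `𝒟_X`: the collection of dense subsets of `X`. -/
def denseFamily (X : Type*) [TopologicalSpace X] : Set (Set X) := {D | Dense D}

/-- `ℬ_{X,x}`: the collection of subsets of `X` having `x` in their closure. -/
def blades (X : Type*) [TopologicalSpace X] (x : X) : Set (Set X) :=
  {A | x ∈ closure A}

/-- An ω-cover of `X`: an open cover such that every finite subset of `X` is
contained in some member. -/
def IsOmegaCover {X : Type*} [TopologicalSpace X] (𝒰 : Set (Set X)) : Prop :=
  (∀ U ∈ 𝒰, IsOpen U) ∧ (⋃₀ 𝒰 = Set.univ) ∧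
    ∀ F : Set X, F.Finite → ∃ U ∈ 𝒰, F ⊆ U

/-- `Ω_X`: the collection of ω-covers of `X`. -/
def omegaCovers (X : Type*) [TopologicalSpace X] : Set (Set (Set X)) :=
  {𝒰 | IsOmegaCover 𝒰}

/-- `𝒪_X`: the collection of open covers of `X`. -/
def openCovers (X : Type*) [TopologicalSpace X] : Set (Set (Set X)) :=
  {𝒰 | (∀ U ∈ 𝒰, IsOpen U) ∧ ⋃₀ 𝒰 = Set.univ}

/-- `C_p(X)`: continuous real-valued functions on `X` with the topology of
pointwise convergence (subspace of the product `ℝ^X`). -/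
abbrev Cp (X : Type*) [TopologicalSpace X] : Type _ := {f : X → ℝ // Continuous f}

/-- Countable fan tightness of `Y` at `y`. -/
def CFTat (Y : Type*) [TopologicalSpace Y] (y : Y) : Prop :=
  ∀ A : ℕ → Set Y, (∀ n, y ∈ closure (A n)) →
    ∃ B : ℕ → Set Y, (∀ n, (B n).Finite ∧ B n ⊆ A n) ∧ y ∈ closure (⋃ n, B n)

/-- Countable dense fan tightness of `Y` at `y`. -/
def CDFTat (Y : Type*) [TopologicalSpace Y] (y : Y) : Prop :=
  ∀ A : ℕ → Set Y, (∀ n, Dense (A n)) →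
    ∃ B : ℕ → Set Y, (∀ n, (B n).Finite ∧ B n ⊆ A n) ∧ y ∈ closure (⋃ n, B n)

/-- Selective separability of `X`. -/
def SelSep (X : Type*) [TopologicalSpace X] : Prop :=
  ∀ D : ℕ → Set X, (∀ n, Dense (D n)) →
    ∃ E : ℕ → Set X, (∀ n, (E n).Finite ∧ E n ⊆ D n) ∧ Dense (⋃ n, E n)

/-- The Ω-Menger selection principle `S_fin(Ω_X, Ω_X)`. -/
def OmegaMenger (X : Type*) [TopologicalSpace X] : Prop :=
  ∀ 𝒰 : ℕ → Set (Set X), (∀ n, 𝒰 n ∈ omegaCovers X) →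
    ∃ ℱ : ℕ → Set (Set X), (∀ n, (ℱ n).Finite ∧ ℱ n ⊆ 𝒰 n) ∧
      (⋃ n, ℱ n) ∈ omegaCovers X

/-- The one-point Lindelöfication topology on `Option α`: sets not containing
`none` (the point `∞`) are open, and a set containing `∞` is open iff its
complement is countable. -/
def lindTop (α : Type*) : TopologicalSpace (Option α) where
  IsOpen S := none ∈ S → Sᶜ.Countable
  isOpen_univ := by simp
  isOpen_inter := by
    intro s t hs ht hmem
    rw [Set.compl_inter]
    exact (hs hmem.1).union (ht hmem.2)
  isOpen_sUnion := by
    intro S hS hmem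
    obtain ⟨s, hsS, hns⟩ := hmem
    exact ((hS s hsS hns).mono
      (Set.compl_subset_compl.mpr (Set.subset_sUnion_of_mem hsS)))

section CountableReplies

variable {S M R : Type*}

theorem exists_countable_mem_forall_subset {f : S → Set S} (hf : ∀ s, (f s).Countable) (s₀ : S) :
    ∃ T : Set S, T.Countable ∧ s₀ ∈ T ∧ ∀ s ∈ T, f s ⊆ T := by
  let layer (n : ℕ) : Set S := (fun T ↦ ⋃ s ∈ T, f s)^[n] {s₀}
  have layer_succ (n : ℕ) : layer (n + 1) = ⋃ s ∈ layer n, f s :=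
    Function.iterate_succ_apply' _ _ _
  have countable_layer (n : ℕ) : (layer n).Countable := by
    induction n with
    | zero => exact Set.countable_singleton s₀
    | succ n ih =>
      rw [layer_succ]
      exact ih.biUnion fun s _ ↦ hf s
  refine ⟨⋃ n, layer n, Set.countable_iUnion countable_layer,
    Set.mem_iUnion_of_mem 0 rfl, fun s hs t ht ↦ ?_⟩
  obtain ⟨n, hn⟩ := Set.mem_iUnion.1 hs
  exact Set.mem_iUnion_of_mem (n + 1) (layer_succ n ▸ Set.mem_biUnion hn ht)

theorem exists_countable_range_forall_apply_eq {f : M → R} (hf : (Set.range f).Countable) :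
    ∃ r : M → M, (Set.range r).Countable ∧ ∀ m, f (r m) = f m := by
  have := hf.to_subtype
  refine ⟨Set.rangeSplitting f ∘ Set.rangeFactorization f, ?_, fun m ↦
    Set.apply_rangeSplitting f _⟩
  exact (Set.countable_range (Set.rangeSplitting f)).mono (Set.range_comp_subset_range _ _)

theorem exists_seq_states_forall_exists_run {reply : S → M → R}
    (hreply : ∀ s, (Set.range (reply s)).Countable) (step : S → M → S) (s₀ : S) :
    ∃ e : ℕ → S, ∀ a : ℕ → M, ∃ (b : ℕ → M) (s : ℕ → S),
      s 0 = s₀ ∧ (∀ n, s (n + 1) = step (s n) (b n)) ∧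
        ∀ n, ∃ k, reply (s n) (b n) = reply (e k) (a k) := by
  choose rep countable_rep reply_rep using fun s ↦
    exists_countable_range_forall_apply_eq (hreply s)
  obtain ⟨T, hT, hs₀, hstep⟩ := exists_countable_mem_forall_subset
    (fun s ↦ (countable_rep s).image (step s)) s₀
  obtain ⟨e, rfl⟩ := hT.exists_eq_range ⟨s₀, hs₀⟩
  refine ⟨e, fun a ↦ ?_⟩
  -- Recursion on indices keeps every state of the run in the range of `e`.
  have exists_next (k : ℕ) : ∃ l, e l = step (e k) (rep (e k) (a k)) :=
    hstep _ ⟨k, rfl⟩ ⟨_, ⟨a k, rfl⟩, rfl⟩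
  choose next e_next using exists_next
  obtain ⟨k₀, e_k₀⟩ := hs₀
  let k (n : ℕ) : ℕ := next^[n] k₀
  refine ⟨fun n ↦ rep (e (k n)) (a (k n)), fun n ↦ e (k n), e_k₀, fun n ↦ ?_,
    fun n ↦ ⟨k n, reply_rep _ _⟩⟩
  simp only [k, Function.iterate_succ_apply', e_next]

end CountableReplies

/-- A finite history of moves from `M`: the number of rounds already played and the moves made in
them. -/
def Position (M : Type*) : Type _ := Σ n : ℕ, Fin n → M

namespace Position

variable {M R : Type*}

/-- The position reached from `p` when the next move is `m`. -/
def snoc (p : Position M) (m : M) : Position M :=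
  ⟨p.1 + 1, Fin.snoc (α := fun _ ↦ M) p.2 m⟩

/-- The position reached after the first `n` moves of the infinite play `b`. -/
def ofPlay (b : ℕ → M) (n : ℕ) : Position M :=
  ⟨n, fun i ↦ b i⟩

theorem snoc_ofPlay (b : ℕ → M) (n : ℕ) : (ofPlay b n).snoc (b n) = ofPlay b (n + 1) :=
  congrArg (Sigma.mk (n + 1)) (Fin.snoc_init_self (α := fun _ ↦ M) fun i : Fin (n + 1) ↦ b i)

theorem exists_seq_forall_exists_play {reply : Position M → M → R}
    (hreply : ∀ p, (Set.range (reply p)).Countable) :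
    ∃ p : ℕ → Position M, ∀ a : ℕ → M, ∃ b : ℕ → M,
      ∀ n, ∃ k, reply (ofPlay b n) (b n) = reply (p k) (a k) := by
  obtain ⟨p, hp⟩ := exists_seq_states_forall_exists_run hreply snoc ⟨0, Fin.elim0⟩
  refine ⟨p, fun a ↦ ?_⟩
  obtain ⟨b, s, s_zero, s_succ, hs⟩ := hp a
  have s_eq (n : ℕ) : s n = ofPlay b n := by
    induction n with
    | zero => exact s_zero.trans (congrArg (Sigma.mk 0) (Subsingleton.elim _ _))
    | succ n ih => rw [s_succ, ih, snoc_ofPlay]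
  exact ⟨b, fun n ↦ s_eq n ▸ hs n⟩

end Position

section SelectionGame

variable {X : Type*} {𝒜 ℬ : Set (Set X)}

theorem WinMarkovFin.winStratFin (h : WinMarkovFin 𝒜 ℬ) : WinStratFin 𝒜 ℬ := by
  obtain ⟨τ, τ_legal, τ_wins⟩ := h
  exact ⟨fun n s ↦ τ (s (Fin.last n)) n, fun n s hs ↦ τ_legal _ (hs _) n, τ_wins⟩

/-- The reply that a strategy `σ` of Player II gives to the move `A` at position `p`. Earlier moves
are required to be legal, whereas `A` is any set because a Markov strategy is a total function. -/
def replyAt (σ : (n : ℕ) → (Fin (n + 1) → Set X) → Set X) (p : Position 𝒜) (A : Set X) : Set X :=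
  σ p.1 (Fin.snoc (α := fun _ ↦ Set X) (fun i ↦ p.2 i) A)

theorem replyAt_ofPlay (σ : (n : ℕ) → (Fin (n + 1) → Set X) → Set X) (b : ℕ → 𝒜) (n : ℕ) :
    replyAt σ (Position.ofPlay b n) (b n) = σ n fun i ↦ b i :=
  congrArg (σ n) (Fin.snoc_init_self (α := fun _ ↦ Set X) fun i : Fin (n + 1) ↦ (b i : Set X))

theorem finite_replyAt_and_subset {σ : (n : ℕ) → (Fin (n + 1) → Set X) → Set X}
    (hσ : ∀ (n : ℕ) (s : Fin (n + 1) → Set X), (∀ i, s i ∈ 𝒜) →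
      (σ n s).Finite ∧ σ n s ⊆ s (Fin.last n))
    (p : Position 𝒜) {A : Set X} (hA : A ∈ 𝒜) :
    (replyAt σ p A).Finite ∧ replyAt σ p A ⊆ A := by
  have moves_mem (i : Fin (p.1 + 1)) :
      Fin.snoc (α := fun _ ↦ Set X) (fun j ↦ (p.2 j : Set X)) A i ∈ 𝒜 := by
    induction i using Fin.lastCases with
    | last => rwa [Fin.snoc_last]
    | cast i => rw [Fin.snoc_castSucc]; exact (p.2 i).2
  simpa only [replyAt, Fin.snoc_last] using hσ p.1 _ moves_mem

theorem WinStratFin.winMarkovFin (h : WinStratFin 𝒜 ℬ) (h𝒜 : (⋃₀ 𝒜).Countable)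
    (hℬ : ∀ B ∈ ℬ, ∀ C : Set X, B ⊆ C → C ∈ ℬ) : WinMarkovFin 𝒜 ℬ := by
  obtain ⟨σ, σ_legal, σ_wins⟩ := h
  have countable_replies (p : Position 𝒜) :
      (Set.range fun A : 𝒜 ↦ replyAt σ p A).Countable := by
    refine (Set.countable_ofPred_finite_subset h𝒜).mono (Set.range_subset_iff.2 fun A ↦ ?_)
    obtain ⟨hfin, hsub⟩ := finite_replyAt_and_subset σ_legal p A.2
    exact ⟨hfin, hsub.trans (Set.subset_sUnion_of_mem A.2)⟩
  obtain ⟨p, hp⟩ := Position.exists_seq_forall_exists_play countable_replies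
  refine ⟨fun A k ↦ replyAt σ (p k) A,
    fun A hA k ↦ finite_replyAt_and_subset σ_legal (p k) hA, fun A hA ↦ ?_⟩
  obtain ⟨b, hb⟩ := hp fun k ↦ ⟨A k, hA k⟩
  refine hℬ _ (σ_wins (fun n ↦ b n) fun n ↦ (b n).2) _ (Set.iUnion_subset fun n ↦ ?_)
  obtain ⟨k, hk⟩ := hb n
  calc σ n (fun i ↦ b i) = replyAt σ (p k) (A k) := (replyAt_ofPlay σ b n).symm.trans hk
    _ ⊆ ⋃ k, replyAt σ (p k) (A k) := Set.subset_iUnion (fun k ↦ replyAt σ (p k) (A k)) k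

end SelectionGame

/-- if `⋃𝒜` is countable and `ℬ` is closed under supersets, then
II wins `G_fin(𝒜, ℬ)` iff II wins it with a Markov strategy. -/
theorem statement12 {α : Type*} (𝒜 ℬ : Set (Set α))
    (h𝒜 : (⋃₀ 𝒜).Countable)
    (hℬ : ∀ B ∈ ℬ, ∀ C : Set α, B ⊆ C → C ∈ ℬ) :
    WinStratFin 𝒜 ℬ ↔ WinMarkovFin 𝒜 ℬ := by
  exact ⟨fun h ↦ h.winMarkovFin h𝒜 hℬ, WinMarkovFin.winStratFin⟩
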